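/- arXiv:1308.0516 — 4 statements merged into one kernel-verified Lean document; each statement's English description precedes it below -/
import Mathlib

section
/- There is no g ∈ GL(4,𝔽₂) whose induced action on ℙ³(𝔽₂) maps the affine set {points with homogeneous coordinates (a₁,a₂,a₃,a₄) satisfying a₄ = 1} onto the type II set; that is, these two totally even 8-point sets lie in distinct orbits of the GL(4,𝔽₂)-action. -/
/-- The projective space ℙ³(𝔽₂): points correspond to one-dimensional
linear subspaces of 𝔽₂⁴. -/
abbrev P3F2 := Projectivization (ZMod 2) (Fin 4 → ZMod 2)

/-- A plane in ℙ³(𝔽₂): the set of points whose corresponding one-dimensional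
subspace is contained in a fixed three-dimensional linear subspace of 𝔽₂⁴. -/
def IsPlane (P : Set P3F2) : Prop :=
  ∃ W : Submodule (ZMod 2) (Fin 4 → ZMod 2),
    Module.finrank (ZMod 2) W = 3 ∧ P = {x : P3F2 | x.submodule ≤ W}

/-- A line in ℙ³(𝔽₂): the set of points whose corresponding one-dimensional
subspace is contained in a fixed two-dimensional linear subspace of 𝔽₂⁴. -/
def IsLine (L : Set P3F2) : Prop :=
  ∃ W : Submodule (ZMod 2) (Fin 4 → ZMod 2),
    Module.finrank (ZMod 2) W = 2 ∧ L = {x : P3F2 | x.submodule ≤ W}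

/-- A subset of ℙ³(𝔽₂) is totally even if it meets every plane in an even
number of points. -/
def TotallyEven (M : Set P3F2) : Prop :=
  ∀ P : Set P3F2, IsPlane P → Even (M ∩ P).ncard

/-- The point of ℙ³(𝔽₂) with homogeneous coordinates `v`. -/
def pt (v : Fin 4 → ZMod 2) (hv : v ≠ 0) : P3F2 := Projectivization.mk (ZMod 2) v hv

/-- The type I (affine) set: points with homogeneous coordinates (a₁,a₂,a₃,a₄)
satisfying a₄ = 1. -/
def typeI : Set P3F2 :=
  {x : P3F2 | ∃ (v : Fin 4 → ZMod 2) (hv : v ≠ 0), v 3 = 1 ∧ x = Projectivization.mk (ZMod 2) v hv}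

/-- The type II set. -/
def typeII : Set P3F2 :=
  {pt ![1,0,0,0] (by decide), pt ![1,1,0,0] (by decide), pt ![0,1,0,0] (by decide),
   pt ![1,0,1,0] (by decide), pt ![0,0,1,0] (by decide), pt ![0,1,1,0] (by decide),
   pt ![1,1,1,1] (by decide), pt ![0,0,0,1] (by decide)}

/-- The action of an element of GL(4,𝔽₂) (a linear automorphism of 𝔽₂⁴)
on ℙ³(𝔽₂). -/
def projMap (g : (Fin 4 → ZMod 2) ≃ₗ[ZMod 2] (Fin 4 → ZMod 2)) : P3F2 → P3F2 :=
  Projectivization.map g.toLinearMap g.injective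

/-- If a point of the image of the affine set has coordinates `v`, then the preimage of `v`
has last coordinate 1. -/
theorem symm_coord (g : (Fin 4 → ZMod 2) ≃ₗ[ZMod 2] (Fin 4 → ZMod 2))
    (v : Fin 4 → ZMod 2) (hv : v ≠ 0) (h : pt v hv ∈ projMap g '' typeI) :
    g.symm v 3 = 1 := by
  obtain ⟨x, ⟨w, hw, hw3, rfl⟩, hx⟩ := h
  unfold projMap pt at hx
  rw [Projectivization.map_mk, Projectivization.mk_eq_mk_iff] at hx
  obtain ⟨a, ha⟩ := hx
  have h1 : a = 1 := Subsingleton.elim _ _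
  rw [h1, one_smul] at ha
  rw [ha]
  simpa using hw3

/-- No element of GL(4,𝔽₂) maps the type I (affine) set onto the type II set:
the two totally even 8-point sets lie in distinct orbits. -/
theorem typeI_not_equivalent_typeII :
    ¬ ∃ g : (Fin 4 → ZMod 2) ≃ₗ[ZMod 2] (Fin 4 → ZMod 2),
        projMap g '' typeI = typeII := by
  rintro ⟨g, hg⟩
  have h1 := symm_coord g ![1,0,0,0] (by decide) (by rw [hg]; simp [typeII])
  have h2 := symm_coord g ![1,1,0,0] (by decide) (by rw [hg]; simp [typeII])
  have h3 := symm_coord g ![0,1,0,0] (by decide) (by rw [hg]; simp [typeII])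
  have e : (![1,1,0,0] : Fin 4 → ZMod 2) = ![1,0,0,0] + ![0,1,0,0] := by decide
  rw [e, map_add, Pi.add_apply, h1, h3] at h2
  exact absurd h2 (by decide)
end

section
/- The type II set is a subset of ℙ³(𝔽₂) with exactly 8 elements and it is totally even: every plane of ℙ³(𝔽₂) meets it in an even number of points. -/
/-- Distinct nonzero vectors over 𝔽₂ span distinct points. -/
lemma pt_inj {v w : Fin 4 → ZMod 2} (hv : v ≠ 0) (hw : w ≠ 0) (h : pt v hv = pt w hw) :
    v = w := by
  unfold pt at h
  rw [Projectivization.mk_eq_mk_iff] at h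
  obtain ⟨a, ha⟩ := h
  have : a = 1 := Subsingleton.elim _ _
  rw [this, one_smul] at ha
  exact ha.symm

/-- The map from nonzero vectors to points. -/
def ptMap (v : {v : Fin 4 → ZMod 2 // v ≠ 0}) : P3F2 := pt v.1 v.2

lemma ptMap_injective : Function.Injective ptMap := fun v w h =>
  Subtype.ext (pt_inj v.2 w.2 h)

/-- The vectors of the type II set. -/
def vecII : Finset {v : Fin 4 → ZMod 2 // v ≠ 0} :=
  {⟨![1,0,0,0], by decide⟩, ⟨![1,1,0,0], by decide⟩, ⟨![0,1,0,0], by decide⟩,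
   ⟨![1,0,1,0], by decide⟩, ⟨![0,0,1,0], by decide⟩, ⟨![0,1,1,0], by decide⟩,
   ⟨![1,1,1,1], by decide⟩, ⟨![0,0,0,1], by decide⟩}

lemma typeII_eq : typeII = Set.image ptMap (vecII : Set {v : Fin 4 → ZMod 2 // v ≠ 0}) := by
  simp only [typeII, vecII, Finset.coe_insert, Finset.coe_singleton, Set.image_insert_eq,
    Set.image_singleton, ptMap]

lemma vecII_even : ∀ a b c d : ZMod 2, Even (vecII.filter (fun v =>
    v.1 0 * a + v.1 1 * b + v.1 2 * c + v.1 3 * d = 0)).card := by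
  decide +kernel

/-- A three-dimensional subspace is the zero set of a linear form. -/
lemma exists_form (W : Submodule (ZMod 2) (Fin 4 → ZMod 2))
    (hW : Module.finrank (ZMod 2) W = 3) : ∃ a b c d : ZMod 2, ∀ v : Fin 4 → ZMod 2,
      v ∈ W ↔ v 0 * a + v 1 * b + v 2 * c + v 3 * d = 0 := by
  have h1 : Module.finrank (ZMod 2) ((Fin 4 → ZMod 2) ⧸ W) = 1 := by
    have := W.finrank_quotient_add_finrank
    rw [hW, Module.finrank_fin_fun] at this
    omega
  let e : ((Fin 4 → ZMod 2) ⧸ W) ≃ₗ[ZMod 2] ZMod 2 :=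
    LinearEquiv.ofFinrankEq _ _ (by rw [h1, Module.finrank_self])
  let f : (Fin 4 → ZMod 2) →ₗ[ZMod 2] ZMod 2 := e.toLinearMap ∘ₗ W.mkQ
  refine ⟨f (Pi.single 0 1), f (Pi.single 1 1), f (Pi.single 2 1), f (Pi.single 3 1),
    fun v => ?_⟩
  have hv : v ∈ W ↔ f v = 0 := by simp [f]
  have hf : f v = ∑ i, v i * f (Pi.single i 1) := by
    rw [LinearMap.pi_apply_eq_sum_univ f v]
    refine Finset.sum_congr rfl fun i _ => ?_
    rw [smul_eq_mul]
    congr 2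
    ext j
    simp [Pi.single_apply, eq_comm]
  rw [hv, hf, Fin.sum_univ_four]

/-- The type II set has exactly 8 elements and is totally even. -/
theorem typeII_totallyEven : typeII.ncard = 8 ∧ TotallyEven typeII := by
  constructor
  · rw [typeII_eq, Set.ncard_image_of_injective _ ptMap_injective, Set.ncard_coe_finset]
    decide +kernel
  · rintro P ⟨W, hW, rfl⟩
    obtain ⟨a, b, c, d, h⟩ := exists_form W hW
    have key : typeII ∩ {x : P3F2 | x.submodule ≤ W} = Set.image ptMap ((vecII.filter (fun v =>
        v.1 0 * a + v.1 1 * b + v.1 2 * c + v.1 3 * d = 0) :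
          Finset {v : Fin 4 → ZMod 2 // v ≠ 0}) : Set {v : Fin 4 → ZMod 2 // v ≠ 0}) := by
      have hm : ∀ v, (ptMap v).submodule ≤ W ↔
          v.1 0 * a + v.1 1 * b + v.1 2 * c + v.1 3 * d = 0 := by
        intro v
        rw [← h, ptMap, pt, Projectivization.submodule_mk, Submodule.span_singleton_le_iff_mem]
      rw [typeII_eq]
      ext x
      constructor
      · rintro ⟨⟨v, hv, rfl⟩, hx⟩
        exact ⟨v, Finset.mem_coe.2 (Finset.mem_filter.2 ⟨hv, (hm v).1 hx⟩), rfl⟩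
      · rintro ⟨v, hv, rfl⟩
        have hv := Finset.mem_filter.1 (Finset.mem_coe.1 hv)
        exact ⟨⟨v, hv.1, rfl⟩, (hm v).2 hv.2⟩
    rw [key, Set.ncard_image_of_injective _ ptMap_injective, Set.ncard_coe_finset]
    exact vecII_even a b c d
end

section
/- Let M be a totally even subset of ℙ³(𝔽₂) with exactly 8 elements. Then there exists a plane P with |M ∩ P| = 6 if and only if there exists a line ℓ of ℙ³(𝔽₂) all of whose points belong to M. -/
theorem mem_iff_rep (W : Submodule (ZMod 2) (Fin 4 → ZMod 2)) (x : P3F2) :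
    x.submodule ≤ W ↔ x.rep ∈ W := by
  rw [Projectivization.submodule_eq, Submodule.span_singleton_le_iff_mem]

theorem rep_mk (v : Fin 4 → ZMod 2) (hv : v ≠ 0) :
    (Projectivization.mk (ZMod 2) v hv).rep = v := by
  obtain ⟨a, ha⟩ := Projectivization.exists_smul_eq_mk_rep (ZMod 2) v hv
  rw [← ha, Subsingleton.elim a 1, one_smul]

theorem ncard_points (W : Submodule (ZMod 2) (Fin 4 → ZMod 2)) :
    {x : P3F2 | x.submodule ≤ W}.ncard + 1 = 2 ^ Module.finrank (ZMod 2) W := by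
  have hinj : Function.Injective (fun x : P3F2 => x.rep) := by
    intro x y h
    have hxy : x.rep = y.rep := h
    rw [← Projectivization.mk_rep x, ← Projectivization.mk_rep y]
    simp only [hxy]
  have himg : Set.image (fun x : P3F2 => x.rep) {x : P3F2 | x.submodule ≤ W}
      = (W : Set (Fin 4 → ZMod 2)) \ {0} := by
    ext v
    constructor
    · rintro ⟨x, hx, rfl⟩
      exact ⟨(mem_iff_rep W x).1 hx, x.rep_nonzero⟩
    · rintro ⟨hv, hne⟩
      have h0 : v ≠ 0 := hne
      refine ⟨Projectivization.mk (ZMod 2) v h0, ?_, rep_mk v h0⟩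
      rw [Set.mem_ofPred_eq, mem_iff_rep, rep_mk]
      exact hv
  rw [← Set.ncard_image_of_injective _ hinj, himg,
    Set.ncard_sdiff_singleton_add_one (by simp) (Set.toFinite _)]
  have := Module.natCard_eq_pow_finrank (K := ZMod 2) (V := W)
  rw [Nat.card_zmod] at this
  rw [← this]
  rfl

theorem finrank_ker_of_ne (f : (Fin 4 → ZMod 2) →ₗ[ZMod 2] ZMod 2) (hf : f ≠ 0) :
    Module.finrank (ZMod 2) (LinearMap.ker f) = 3 := by
  have h1 := f.finrank_range_add_finrank_ker
  rw [LinearMap.range_eq_top.2 (LinearMap.surjective hf)] at h1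
  simp at h1
  omega

/-- For a totally even 8-point subset M of ℙ³(𝔽₂), there is a plane meeting M
in 6 points if and only if there is a line entirely contained in M. -/
theorem plane_six_iff_line_subset (M : Set P3F2)
    (hM : M.ncard = 8) (hTE : TotallyEven M) :
    (∃ P : Set P3F2, IsPlane P ∧ (M ∩ P).ncard = 6) ↔
    (∃ L : Set P3F2, IsLine L ∧ L ⊆ M) := by
  classical
  have hfinT : Finite P3F2 := inferInstance
  constructor
  · rintro ⟨P, ⟨W, hW, rfl⟩, h6⟩
    have hc := ncard_points W
    rw [hW] at hc
    have hd := Set.ncard_inter_add_ncard_sdiff_eq_ncard {x : P3F2 | x.submodule ≤ W} M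
      (Set.toFinite _)
    rw [Set.inter_comm, h6] at hd
    obtain ⟨p, hp⟩ := Set.ncard_eq_one.1
      (show ({x : P3F2 | x.submodule ≤ W} \ M).ncard = 1 by omega)
    have hpW : p.rep ∈ W := by
      have : p ∈ {x : P3F2 | x.submodule ≤ W} \ M := by rw [hp]; rfl
      exact (mem_iff_rep W p).1 this.1
    obtain ⟨i, hi⟩ := Function.ne_iff.1 p.rep_nonzero
    let f : (Fin 4 → ZMod 2) →ₗ[ZMod 2] ZMod 2 := LinearMap.proj i
    have hfW : f.domRestrict W ≠ 0 := fun h => hi (by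
      simpa [f] using LinearMap.congr_fun h ⟨p.rep, hpW⟩)
    refine ⟨_, ⟨(LinearMap.ker (f.domRestrict W)).map W.subtype, ?_, rfl⟩, ?_⟩
    · rw [Submodule.finrank_map_subtype_eq]
      have h1 := (f.domRestrict W).finrank_range_add_finrank_ker
      rw [LinearMap.range_eq_top.2 (LinearMap.surjective hfW), hW] at h1
      simp at h1
      omega
    · intro x hx
      rw [Set.mem_ofPred_eq, mem_iff_rep] at hx
      obtain ⟨⟨y, hy⟩, hyk, hyx⟩ := hx
      by_contra hxM
      have : x ∈ {x : P3F2 | x.submodule ≤ W} \ M := by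
        refine ⟨(mem_iff_rep W x).2 ?_, hxM⟩
        rw [← hyx]; exact hy
      rw [hp, Set.mem_singleton_iff] at this
      subst this
      apply hi
      have h1 : f y = 0 := by simpa using hyk
      rw [← hyx]
      exact h1
  · rintro ⟨L, ⟨W, hW, rfl⟩, hL⟩
    have hL3 := ncard_points W
    rw [hW] at hL3
    have hq : Module.finrank (ZMod 2) ((Fin 4 → ZMod 2) ⧸ W)
        = Module.finrank (ZMod 2) (Fin 2 → ZMod 2) := by
      have := W.finrank_quotient_add_finrank
      simp at this ⊢
      omega
    let e := LinearEquiv.ofFinrankEq _ _ hq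
    let π : (Fin 4 → ZMod 2) →ₗ[ZMod 2] (Fin 2 → ZMod 2) := e.toLinearMap ∘ₗ W.mkQ
    have hπs : Function.Surjective π := e.surjective.comp W.mkQ_surjective
    have hπ : ∀ v, π v = 0 ↔ v ∈ W := by
      intro v
      simp [π]
    let f : (Fin 4 → ZMod 2) →ₗ[ZMod 2] ZMod 2 := LinearMap.proj 0 ∘ₗ π
    let g : (Fin 4 → ZMod 2) →ₗ[ZMod 2] ZMod 2 := LinearMap.proj 1 ∘ₗ π
    have hf : f ≠ 0 := by
      obtain ⟨v, hv⟩ := hπs ![1, 0]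
      intro h
      simpa [f, hv] using LinearMap.congr_fun h v
    have hg : g ≠ 0 := by
      obtain ⟨v, hv⟩ := hπs ![0, 1]
      intro h
      simpa [g, hv] using LinearMap.congr_fun h v
    have hfg : f + g ≠ 0 := by
      obtain ⟨v, hv⟩ := hπs ![0, 1]
      intro h
      simpa [f, g, hv] using LinearMap.congr_fun h v
    have hWfg : ∀ v, v ∈ W ↔ f v = 0 ∧ g v = 0 := by
      intro v
      rw [← hπ, funext_iff, Fin.forall_fin_two]
      rfl
    -- each plane through the line contains at least four points of M
    have key : ∀ h : (Fin 4 → ZMod 2) →ₗ[ZMod 2] ZMod 2, h ≠ 0 → (∀ v ∈ W, h v = 0) →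
        IsPlane {x : P3F2 | x.submodule ≤ LinearMap.ker h} ∧
        Even (M ∩ {x : P3F2 | x.submodule ≤ LinearMap.ker h}).ncard ∧
        3 ≤ (M ∩ {x : P3F2 | x.submodule ≤ LinearMap.ker h}).ncard ∧
        (M ∩ {x : P3F2 | x.submodule ≤ LinearMap.ker h}).ncard =
          ∑ x ∈ M.toFinite.toFinset, if h x.rep = 0 then 1 else 0 := by
      intro h h0 hWh
      have hP : IsPlane {x : P3F2 | x.submodule ≤ LinearMap.ker h} :=
        ⟨_, finrank_ker_of_ne h h0, rfl⟩
      refine ⟨hP, hTE _ hP, ?_, ?_⟩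
      · have : {x : P3F2 | x.submodule ≤ W}.ncard ≤
            (M ∩ {x : P3F2 | x.submodule ≤ LinearMap.ker h}).ncard :=
          Set.ncard_le_ncard (fun x hx => ⟨hL hx, show x.submodule ≤ LinearMap.ker h from
            le_trans (show x.submodule ≤ W from hx) hWh⟩) (Set.toFinite _)
        omega
      · rw [← Finset.card_filter, ← Set.ncard_coe_finset]
        congr 1
        ext x
        simp [mem_iff_rep]
    obtain ⟨pf, ef, lf, cf⟩ := key f hf (fun v hv => ((hWfg v).1 hv).1)
    obtain ⟨pg, eg, lg, cg⟩ := key g hg (fun v hv => ((hWfg v).1 hv).2)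
    obtain ⟨ph, eh, lh, ch⟩ := key (f + g) hfg (fun v hv => by
      simp [((hWfg v).1 hv).1, ((hWfg v).1 hv).2])
    have hLc : {x : P3F2 | x.submodule ≤ W}.ncard =
        ∑ x ∈ M.toFinite.toFinset, if f x.rep = 0 ∧ g x.rep = 0 then 1 else 0 := by
      rw [← Finset.card_filter, ← Set.ncard_coe_finset]
      congr 1
      ext x
      have := @hL x
      simp only [Set.mem_ofPred_eq, mem_iff_rep, hWfg] at this
      simp only [Set.mem_ofPred_eq, mem_iff_rep, hWfg, Finset.coe_filter, Set.Finite.mem_toFinset]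
      tauto
    have hMc : M.ncard = ∑ x ∈ M.toFinite.toFinset, 1 := by
      rw [Set.ncard_eq_toFinset_card M M.toFinite, Finset.card_eq_sum_ones]
    have hab : ∀ a b : ZMod 2, ((if a = 0 then 1 else 0) + (if b = 0 then 1 else 0)
        + (if a + b = 0 then 1 else 0) : ℕ) = 1 + 2 * (if a = 0 ∧ b = 0 then 1 else 0) := by
      decide
    have tot : (M ∩ {x : P3F2 | x.submodule ≤ LinearMap.ker f}).ncard
        + (M ∩ {x : P3F2 | x.submodule ≤ LinearMap.ker g}).ncard
        + (M ∩ {x : P3F2 | x.submodule ≤ LinearMap.ker (f + g)}).ncard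
        = M.ncard + 2 * {x : P3F2 | x.submodule ≤ W}.ncard := by
      rw [cf, cg, ch, hLc, hMc, Finset.mul_sum, ← Finset.sum_add_distrib,
        ← Finset.sum_add_distrib, ← Finset.sum_add_distrib]
      exact Finset.sum_congr rfl (fun x _ => hab _ _)
    obtain ⟨a, ha⟩ := ef
    obtain ⟨b, hb⟩ := eg
    obtain ⟨c, hc⟩ := eh
    have : a = 3 ∨ b = 3 ∨ c = 3 := by omega
    rcases this with h | h | h
    · exact ⟨_, pf, by omega⟩
    · exact ⟨_, pg, by omega⟩
    · exact ⟨_, ph, by omega⟩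
end

section
/- Let M be a totally even subset of ℙ³(𝔽₂) with exactly 8 elements such that M ∩ P ≠ ∅ for every plane P of ℙ³(𝔽₂). Then there exists a plane P with |M ∩ P| = 6. Equivalently: it is impossible that 0 < |M ∩ P| ≤ 4 holds for every plane P. -/
abbrev V4 := Fin 4 → ZMod 2

def dotf (f v : V4) : ZMod 2 := f 0 * v 0 + f 1 * v 1 + f 2 * v 2 + f 3 * v 3

def dotL (f : V4) : V4 →ₗ[ZMod 2] ZMod 2 where
  toFun := dotf f
  map_add' := by intro x y; simp only [dotf, Pi.add_apply]; ring
  map_smul' := by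
    intro c x; simp only [dotf, Pi.smul_apply, smul_eq_mul, RingHom.id_apply]; ring

def cnt (S : Finset V4) (f : V4) : ℕ := (S.filter (fun v => dotf f v = 0)).card

set_option maxRecDepth 100000 in
theorem count_one : ∀ v : V4, v ≠ 0 →
    ((Finset.univ : Finset V4).filter (fun f => dotf f v = 0)).card = 8 := by
  decide +kernel

set_option maxRecDepth 100000 in
theorem count_two : ∀ v w : V4, v ≠ 0 → w ≠ 0 → v ≠ w →
    ((Finset.univ : Finset V4).filter (fun f => dotf f v = 0 ∧ dotf f w = 0)).card = 4 := by
  decide +kernel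

set_option maxRecDepth 100000 in
theorem plane_card : ∀ f : V4, f ≠ 0 →
    ((Finset.univ : Finset V4).filter (fun v => v ≠ 0 ∧ dotf f v = 0)).card = 7 := by
  decide +kernel

theorem sum_cnt (S : Finset V4) (h0 : (0 : V4) ∉ S) : ∑ f, cnt S f = S.card * 8 := by
  have h : ∀ f, cnt S f = ∑ v ∈ S, if dotf f v = 0 then 1 else 0 := by
    intro f; simp only [cnt, Finset.card_filter]
  simp_rw [h]
  rw [Finset.sum_comm, Finset.sum_const_nat (m := 8)]
  intro v hv
  rw [← Finset.card_filter]
  exact count_one v (fun e => h0 (e ▸ hv))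

theorem sum_cnt_sq (S : Finset V4) (h0 : (0 : V4) ∉ S) :
    ∑ f, cnt S f * cnt S f = S.card * (S.card * 4 + 4) := by
  have h : ∀ f, cnt S f * cnt S f =
      ∑ v ∈ S, ∑ w ∈ S, if dotf f v = 0 ∧ dotf f w = 0 then 1 else 0 := by
    intro f
    simp only [cnt, Finset.card_filter]
    rw [Finset.sum_mul_sum]
    refine Finset.sum_congr rfl fun v _ => Finset.sum_congr rfl fun w _ => ?_
    by_cases a : dotf f v = 0 <;> by_cases b : dotf f w = 0 <;> simp [a, b]
  simp_rw [h]
  rw [Finset.sum_comm, Finset.sum_const_nat (m := S.card * 4 + 4)]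
  intro v hv
  have hv0 : v ≠ 0 := fun e => h0 (e ▸ hv)
  rw [Finset.sum_comm]
  have h2 : ∀ w ∈ S, (∑ f : V4, if dotf f v = 0 ∧ dotf f w = 0 then 1 else 0)
      = 4 + if w = v then 4 else 0 := by
    intro w hw
    rw [← Finset.card_filter]
    split_ifs with e
    · subst e
      simpa using count_one w hv0
    · exact count_two v w hv0 (fun e => h0 (e ▸ hw)) (fun h => e h.symm)
  rw [Finset.sum_congr rfl h2, Finset.sum_add_distrib]
  simp [hv]

theorem exists_six (S : Finset V4) (h0 : (0 : V4) ∉ S) (h8 : S.card = 8)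
    (he : ∀ f : V4, f ≠ 0 → Even (cnt S f)) (hp : ∀ f : V4, f ≠ 0 → 0 < cnt S f) :
    ∃ f : V4, f ≠ 0 ∧ cnt S f = 6 := by
  by_contra! hno
  have h1 := sum_cnt S h0
  have h2 := sum_cnt_sq S h0
  rw [h8] at h1 h2
  have hz : cnt S 0 = 8 := by simp [cnt, dotf, h8]
  have hmem := Finset.mem_univ (0 : V4)
  rw [← Finset.add_sum_erase _ _ hmem, hz] at h1 h2
  have key : ∀ f ∈ (Finset.univ : Finset V4).erase 0,
      cnt S f * cnt S f + 8 = 6 * cnt S f := by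
    intro f hf
    have hf0 : f ≠ 0 := Finset.ne_of_mem_erase hf
    have hle : cnt S f ≤ 7 := by
      rw [← plane_card f hf0]
      apply Finset.card_le_card
      intro v hv
      simp only [Finset.mem_filter, Finset.mem_univ, true_and] at hv ⊢
      exact ⟨fun e => h0 (e ▸ hv.1), hv.2⟩
    have a := he f hf0
    have b := hp f hf0
    have c := hno f hf0
    generalize cnt S f = n at *
    interval_cases n <;> first | rfl | exact absurd rfl c | exact absurd a (by decide)
  have h3 := Finset.sum_congr rfl key
  rw [Finset.sum_add_distrib, ← Finset.mul_sum] at h3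
  have hc : ((Finset.univ : Finset V4).erase 0).card = 15 := by
    rw [Finset.card_erase_of_mem hmem]; simp
  rw [Finset.sum_const, hc, smul_eq_mul] at h3
  omega

theorem isPlane_ker (f : V4) (hf : f ≠ 0) :
    IsPlane {x : P3F2 | dotf f x.rep = 0} := by
  refine ⟨LinearMap.ker (dotL f), ?_, ?_⟩
  · have hne : dotL f ≠ 0 := by
      intro h
      apply hf
      have hh : ∀ v, dotf f v = 0 := fun v => LinearMap.congr_fun h v
      funext i
      have := hh (Pi.single i 1)
      fin_cases i <;> simpa [dotf, Pi.single_apply] using this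
    have := Module.Dual.finrank_ker_add_one_of_ne_zero (f := dotL f) hne
    simp at this
    omega
  · ext x
    rw [Set.mem_ofPred_eq, Set.mem_ofPred_eq, Projectivization.submodule_eq,
      Submodule.span_singleton_le_iff_mem, LinearMap.mem_ker]
    rfl

theorem rep_inj : Function.Injective (fun x : P3F2 => x.rep) := by
  intro x y h
  rw [← Projectivization.mk_rep x, ← Projectivization.mk_rep y]
  congr 1

/-- A totally even 8-point subset of ℙ³(𝔽₂) meeting every plane non-trivially
must meet some plane in exactly 6 points. -/
theorem totallyEven_meets_some_plane_in_six (M : Set P3F2)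
    (hM : M.ncard = 8) (hTE : TotallyEven M)
    (hne : ∀ P : Set P3F2, IsPlane P → (M ∩ P).Nonempty) :
    ∃ P : Set P3F2, IsPlane P ∧ (M ∩ P).ncard = 6 := by
  classical
  have hfin : M.Finite := Set.finite_of_ncard_ne_zero (by omega)
  let S : Finset V4 := hfin.toFinset.image (fun x => x.rep)
  have h0 : (0 : V4) ∉ S := by
    intro h
    obtain ⟨x, -, hx⟩ := Finset.mem_image.1 h
    exact x.rep_nonzero hx
  have h8 : S.card = 8 := by
    rw [Finset.card_image_of_injective _ rep_inj, ← Set.ncard_eq_toFinset_card M hfin, hM]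
  have hcnt : ∀ f : V4, (M ∩ {x : P3F2 | dotf f x.rep = 0}).ncard = cnt S f := by
    intro f
    have hset : M ∩ {x : P3F2 | dotf f x.rep = 0} =
        ↑(hfin.toFinset.filter (fun x => dotf f x.rep = 0)) := by
      ext x; simp
    rw [hset, Set.ncard_coe_finset, cnt, Finset.filter_image,
      Finset.card_image_of_injective _ rep_inj]
  obtain ⟨f, hf, h6⟩ := exists_six S h0 h8
    (fun f hf => hcnt f ▸ hTE _ (isPlane_ker f hf))
    (fun f hf => by
      rw [← hcnt f]
      exact (Set.ncard_pos (hfin.inter_of_left _)).2 (hne _ (isPlane_ker f hf)))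
  exact ⟨_, isPlane_ker f hf, (hcnt f).trans h6⟩
end
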